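/- arXiv:1112.3797 — 2 statements merged into one kernel-verified Lean document; each statement's English description precedes it below -/
import Mathlib

section
/- The set {a ∈ ℝ : J̃(a) > 0} is nonempty and bounded above; in particular its supremum γ̃ satisfies 0 < γ̃ < ∞. -/
/-- Let `ψ : ℝ → ℝ` be convex with `ψ(0) > 0` and `inf_{t∈[0,1]} ψ(t) ≤ 0`.
With `J̃(a) := inf_{t ≥ 0} (ψ(-t) - a·t)`, the set `{a : J̃(a) > 0}`
(meaning: there is `δ > 0` with `ψ(-t) - a·t ≥ δ` for all `t ≥ 0`) is nonempty
and bounded above; in particular `γ̃ := sup{a : J̃(a) > 0}` satisfies `0 < γ̃ < ∞`. -/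
theorem biggins_constant_exists
    (ψ : ℝ → ℝ) (hconv : ConvexOn ℝ Set.univ ψ) (hψ0 : 0 < ψ 0)
    (hinf : sInf (ψ '' Set.Icc (0 : ℝ) 1) ≤ 0) :
    {a : ℝ | ∃ δ > 0, ∀ t ≥ (0 : ℝ), δ ≤ ψ (-t) - a * t}.Nonempty ∧
    BddAbove {a : ℝ | ∃ δ > 0, ∀ t ≥ (0 : ℝ), δ ≤ ψ (-t) - a * t} ∧
    0 < sSup {a : ℝ | ∃ δ > 0, ∀ t ≥ (0 : ℝ), δ ≤ ψ (-t) - a * t} := by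
  have hcont : ContinuousOn ψ Set.univ := hconv.continuousOn isOpen_univ
  have hcomp : IsCompact (ψ '' Set.Icc (0 : ℝ) 1) :=
    isCompact_Icc.image_of_continuousOn (hcont.mono (Set.subset_univ _))
  have hne : (ψ '' Set.Icc (0 : ℝ) 1).Nonempty := ⟨ψ 0, 0, by simp, rfl⟩
  obtain ⟨s, hs, hsv⟩ := hcomp.sInf_mem hne
  have hs0 : ψ s ≤ 0 := by rw [hsv]; exact hinf
  have hspos : 0 < s := by
    rcases hs.1.lt_or_eq with h | h
    · exact h
    · rw [← h] at hs0; linarith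
  have hmem : ψ 0 / s ∈ {a : ℝ | ∃ δ > 0, ∀ t ≥ (0 : ℝ), δ ≤ ψ (-t) - a * t} := by
    refine ⟨ψ 0, hψ0, fun t ht => ?_⟩
    have hst : 0 < s + t := by linarith
    have h := hconv.2 (Set.mem_univ (-t)) (Set.mem_univ s)
      (show 0 ≤ s / (s + t) by positivity) (show 0 ≤ t / (s + t) by positivity)
      (by field_simp)
    simp only [smul_eq_mul] at h
    have e : s / (s + t) * -t + t / (s + t) * s = 0 := by field_simp; ring
    have e2 : s / (s + t) * ψ (-t) + t / (s + t) * ψ s = (s * ψ (-t) + t * ψ s) / (s + t) := by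
      field_simp
    rw [e, e2, le_div_iff₀ hst] at h
    have h3 : t * ψ s ≤ 0 := mul_nonpos_of_nonneg_of_nonpos ht hs0
    have h4 : s * (ψ (-t) - ψ 0 / s * t - ψ 0) = s * ψ (-t) - ψ 0 * t - s * ψ 0 := by
      field_simp
    have h5 : 0 ≤ ψ (-t) - ψ 0 / s * t - ψ 0 := by
      refine nonneg_of_mul_nonneg_right ?_ hspos
      rw [h4]; linarith
    linarith
  have hbdd : BddAbove {a : ℝ | ∃ δ > 0, ∀ t ≥ (0 : ℝ), δ ≤ ψ (-t) - a * t} := by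
    refine ⟨ψ (-1), ?_⟩
    rintro a ⟨δ, hδ, h⟩
    have := h 1 (by norm_num)
    linarith
  exact ⟨⟨_, hmem⟩, hbdd, lt_of_lt_of_le (div_pos hψ0 hspos) (le_csSup hbdd hmem)⟩
end

section
/- If in addition μ([α, ∞)) ≥ 1, then γ = α. -/
open MeasureTheory

/-- Let `μ` be a nonzero finite Borel measure on `ℝ` of total mass `> 1`, supported in
`[-M, M]`. With `Λ(t) := log ∫ e^{t·s} dμ(s)`, `α := sup{s : μ([s,∞)) > 0}` and
`γ := sup{a : inf_{t ≥ 0}(Λ(t) - a·t) > 0}` (where positivity of the infimum means that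
there is `δ > 0` with `Λ(t) - a·t ≥ δ` for all `t ≥ 0`), if in addition
`μ([α,∞)) ≥ 1` then `γ = α`. -/
theorem velocity_eq_esssup
    (μ : Measure ℝ) [IsFiniteMeasure μ] (M : ℝ)
    (hmass : 1 < μ Set.univ) (hsupp : μ (Set.Icc (-M) M)ᶜ = 0)
    (hα : 1 ≤ μ (Set.Ici (sSup {s : ℝ | 0 < μ (Set.Ici s)}))) :
    sSup {a : ℝ | ∃ δ > 0, ∀ t ≥ (0 : ℝ),
        δ ≤ Real.log (∫ s, Real.exp (t * s) ∂μ) - a * t} =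
      sSup {s : ℝ | 0 < μ (Set.Ici s)} := by
  set α := sSup {s : ℝ | 0 < μ (Set.Ici s)} with hαdef
  have hbdd : BddAbove {s : ℝ | 0 < μ (Set.Ici s)} := by
    refine ⟨M, fun s hs => ?_⟩
    by_contra hlt
    push Not at hlt
    have h0 : μ (Set.Ici s) = 0 := by
      refine measure_mono_null (fun x hx => ?_) hsupp
      intro hx2
      exact absurd (le_trans (show s ≤ x from hx) hx2.2) (not_le.mpr hlt)
    have hs' : 0 < μ (Set.Ici s) := hs
    rw [h0] at hs'
    exact lt_irrefl _ hs'
  have hle : ∀ᵐ s ∂μ, s ≤ α := by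
    have hn : ∀ n : ℕ, ∀ᵐ s ∂μ, s < α + 1 / ((n : ℝ) + 1) := by
      intro n
      have hp : (0 : ℝ) < 1 / ((n : ℝ) + 1) := by positivity
      have h0 : μ (Set.Ici (α + 1 / ((n : ℝ) + 1))) = 0 := by
        by_contra hne
        have := le_csSup hbdd
          (show α + 1 / ((n : ℝ) + 1) ∈ {s : ℝ | 0 < μ (Set.Ici s)} from pos_iff_ne_zero.mpr hne)
        linarith
      rw [ae_iff]
      simpa [Set.Ici, not_lt] using h0
    filter_upwards [ae_all_iff.mpr hn] with s hs
    refine le_of_forall_pos_lt_add (fun ε hε => ?_)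
    obtain ⟨n, hn⟩ := exists_nat_one_div_lt hε
    linarith [hs n]
  have hge : ∀ᵐ s ∂μ, -M ≤ s := by
    have : ∀ᵐ s ∂μ, s ∈ Set.Icc (-M) M := hsupp
    filter_upwards [this] with s hs using hs.1
  have hint : ∀ t ≥ (0 : ℝ), Integrable (fun s => Real.exp (t * s)) μ := by
    intro t ht
    refine Integrable.of_bound (by fun_prop) (Real.exp (t * α)) ?_
    filter_upwards [hle] with s hs
    rw [Real.norm_eq_abs, abs_of_pos (Real.exp_pos _)]
    exact Real.exp_le_exp.mpr (mul_le_mul_of_nonneg_left hs ht)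
  have hm : 1 < μ.real Set.univ := by
    have := (ENNReal.toReal_lt_toReal ENNReal.one_ne_top (measure_ne_top μ _)).mpr hmass
    simpa [Measure.real] using this
  have hα1 : 1 ≤ μ.real (Set.Ici α) := by
    have := (ENNReal.toReal_le_toReal ENNReal.one_ne_top (measure_ne_top μ _)).mpr hα
    simpa [Measure.real] using this
  have hm0 : 0 < μ.real Set.univ := by linarith
  have hL : 0 < Real.log (μ.real Set.univ) := Real.log_pos hm
  have low1 : ∀ t ≥ (0 : ℝ), Real.exp (t * α) ≤ ∫ s, Real.exp (t * s) ∂μ := by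
    intro t ht
    have h1 : ∫ s in Set.Ici α, Real.exp (t * α) ∂μ ≤ ∫ s in Set.Ici α, Real.exp (t * s) ∂μ := by
      refine setIntegral_mono_on (integrable_const _) (hint t ht).integrableOn measurableSet_Ici ?_
      intro s hs
      exact Real.exp_le_exp.mpr (mul_le_mul_of_nonneg_left hs ht)
    have h2 : ∫ s in Set.Ici α, Real.exp (t * s) ∂μ ≤ ∫ s, Real.exp (t * s) ∂μ :=
      setIntegral_le_integral (hint t ht) (Filter.Eventually.of_forall fun s => (Real.exp_pos _).le)
    rw [setIntegral_const, smul_eq_mul] at h1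
    nlinarith [Real.exp_pos (t * α)]
  have low2 : ∀ t ≥ (0 : ℝ), μ.real Set.univ * Real.exp (t * (-M)) ≤ ∫ s, Real.exp (t * s) ∂μ := by
    intro t ht
    have h1 : ∫ s, Real.exp (t * (-M)) ∂μ ≤ ∫ s, Real.exp (t * s) ∂μ := by
      refine integral_mono_ae (integrable_const _) (hint t ht) ?_
      filter_upwards [hge] with s hs
      exact Real.exp_le_exp.mpr (mul_le_mul_of_nonneg_left hs ht)
    rwa [integral_const, smul_eq_mul] at h1
  have upp : ∀ t ≥ (0 : ℝ), ∫ s, Real.exp (t * s) ∂μ ≤ μ.real Set.univ * Real.exp (t * α) := by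
    intro t ht
    have h1 : ∫ s, Real.exp (t * s) ∂μ ≤ ∫ s, Real.exp (t * α) ∂μ := by
      refine integral_mono_ae (hint t ht) (integrable_const _) ?_
      filter_upwards [hle] with s hs
      exact Real.exp_le_exp.mpr (mul_le_mul_of_nonneg_left hs ht)
    rwa [integral_const, smul_eq_mul] at h1
  have hpos : ∀ t ≥ (0 : ℝ), 0 < ∫ s, Real.exp (t * s) ∂μ := fun t ht =>
    lt_of_lt_of_le (Real.exp_pos _) (low1 t ht)
  have mem : ∀ a < α, a ∈ {a : ℝ | ∃ δ > 0, ∀ t ≥ (0 : ℝ),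
        δ ≤ Real.log (∫ s, Real.exp (t * s) ∂μ) - a * t} := by
    intro a ha
    have hc : 0 < α - a := by linarith
    have hK := abs_nonneg (M + a)
    have hcK : 0 < (α - a) + |M + a| := by linarith
    refine ⟨(α - a) * Real.log (μ.real Set.univ) / ((α - a) + |M + a|), by positivity, ?_⟩
    intro t ht
    have e1 := Real.log_le_log (Real.exp_pos _) (low1 t ht)
    have e2 := Real.log_le_log (by positivity) (low2 t ht)
    rw [Real.log_exp] at e1
    rw [Real.log_mul hm0.ne' (Real.exp_pos _).ne', Real.log_exp] at e2
    rw [div_le_iff₀ hcK]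
    set X := Real.log (∫ s, Real.exp (t * s) ∂μ)
    have f1 : (α - a) * t ≤ X - a * t := by linarith
    have f2 : Real.log (μ.real Set.univ) - |M + a| * t ≤ X - a * t := by
      have := mul_le_mul_of_nonneg_right (le_abs_self (M + a)) ht
      linarith
    have g1 := mul_le_mul_of_nonneg_left f1 hK
    have g2 := mul_le_mul_of_nonneg_left f2 hc.le
    linarith
  refine csSup_eq_of_forall_le_of_forall_lt_exists_gt ⟨α - 1, mem _ (by linarith)⟩ ?_ ?_
  · rintro a ⟨δ, hδ, h⟩
    by_contra hlt
    push Not at hlt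
    have hc : 0 < a - α := by linarith
    have ht : (0 : ℝ) ≤ Real.log (μ.real Set.univ) / (a - α) := by positivity
    have e1 := h _ ht
    have e2 := Real.log_le_log (hpos _ ht) (upp _ ht)
    rw [Real.log_mul hm0.ne' (Real.exp_pos _).ne', Real.log_exp] at e2
    have e3 : Real.log (μ.real Set.univ) / (a - α) * (a - α) = Real.log (μ.real Set.univ) :=
      div_mul_cancel₀ _ hc.ne'
    linarith
  · intro w hw
    exact ⟨(w + α) / 2, mem _ (by linarith), by linarith⟩
end
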